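/- Let n ≥ 1 and let c_1,…,c_{2n} be the Jordan–Wigner Majorana operators on (ℂ²)^{⊗n}. For any permutation σ of {1,…,2n}, the operators ic_{σ(1)}c_{σ(2)}, ic_{σ(3)}c_{σ(4)}, …, ic_{σ(2n−1)}c_{σ(2n)} are pairwise commuting Hermitian involutions, and their joint (+1)-eigenspace { φ ∈ (ℂ²)^{⊗n} : i c_{σ(2j−1)} c_{σ(2j)} φ = φ for all j = 1,…,n } has complex dimension exactly 1. -/

import Mathlib

open scoped Matrix

/-- The Pauli X matrix. -/
noncomputable def pauliX : Matrix (Fin 2) (Fin 2) ℂ := !![0, 1; 1, 0]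

/-- The Pauli Y matrix. -/
noncomputable def pauliY : Matrix (Fin 2) (Fin 2) ℂ := !![0, -Complex.I; Complex.I, 0]

/-- The Pauli Z matrix. -/
noncomputable def pauliZ : Matrix (Fin 2) (Fin 2) ℂ := !![1, 0; 0, -1]

/-- The `n`-fold tensor (Kronecker) product of single-qubit matrices. -/
noncomputable def tensorProd (n : ℕ) (A : Fin n → Matrix (Fin 2) (Fin 2) ℂ) :
    Matrix (Fin n → Fin 2) (Fin n → Fin 2) ℂ :=
  fun x y => ∏ j : Fin n, A j (x j) (y j)

/-- The Jordan–Wigner Majorana operators (0-indexed):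
`c_{2j} = Z^{⊗j} ⊗ Y ⊗ I^{⊗(n-j-1)}`, `c_{2j+1} = Z^{⊗j} ⊗ X ⊗ I^{⊗(n-j-1)}`. -/
noncomputable def jw (n : ℕ) (p : Fin (2 * n)) :
    Matrix (Fin n → Fin 2) (Fin n → Fin 2) ℂ :=
  tensorProd n (fun j =>
    if (j : ℕ) < (p : ℕ) / 2 then pauliZ
    else if (j : ℕ) = (p : ℕ) / 2 then (if (p : ℕ) % 2 = 0 then pauliY else pauliX)
    else 1)

/-- The paired link operators `i c_{σ(2j-1)} c_{σ(2j)}` determined by a permutation `σ`. -/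
noncomputable def linkOp (n : ℕ) (σ : Equiv.Perm (Fin (2 * n))) (j : Fin n) :
    Matrix (Fin n → Fin 2) (Fin n → Fin 2) ℂ :=
  Complex.I • (jw n (σ ⟨2 * (j : ℕ), by omega⟩) * jw n (σ ⟨2 * (j : ℕ) + 1, by omega⟩))

theorem tensorProd_mul (n : ℕ) (A B : Fin n → Matrix (Fin 2) (Fin 2) ℂ) :
    tensorProd n A * tensorProd n B = tensorProd n (fun j => A j * B j) := by
  ext x y
  simp only [Matrix.mul_apply, tensorProd, Finset.prod_univ_sum, Fintype.piFinset_univ,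
    Finset.prod_mul_distrib]

theorem tensorProd_one (n : ℕ) : tensorProd n (fun _ => 1) = 1 := by
  ext x y
  simp only [tensorProd, Matrix.one_apply]
  by_cases h : x = y
  · subst h; simp
  · rw [if_neg h]
    obtain ⟨j, hj⟩ := Function.ne_iff.mp h
    exact Finset.prod_eq_zero (Finset.mem_univ j) (if_neg hj)

theorem tensorProd_conjTranspose (n : ℕ) (A : Fin n → Matrix (Fin 2) (Fin 2) ℂ) :
    (tensorProd n A)ᴴ = tensorProd n (fun j => (A j)ᴴ) := by
  ext x y
  simp [Matrix.conjTranspose_apply, tensorProd]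

theorem tensorProd_smul (n : ℕ) (s : Fin n → ℂ) (A : Fin n → Matrix (Fin 2) (Fin 2) ℂ) :
    tensorProd n (fun j => s j • A j) = (∏ j, s j) • tensorProd n A := by
  ext x y
  simp [tensorProd, Finset.prod_mul_distrib]

theorem pX2 : pauliX * pauliX = 1 := by
  ext i j; fin_cases i <;> fin_cases j <;> simp [pauliX]
theorem pY2 : pauliY * pauliY = 1 := by
  ext i j; fin_cases i <;> fin_cases j <;> simp [pauliY]
theorem pZ2 : pauliZ * pauliZ = 1 := by
  ext i j; fin_cases i <;> fin_cases j <;> simp [pauliZ]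
theorem pXH : pauliXᴴ = pauliX := by
  ext i j; fin_cases i <;> fin_cases j <;> simp [pauliX]
theorem pYH : pauliYᴴ = pauliY := by
  ext i j; fin_cases i <;> fin_cases j <;> simp [pauliY]
theorem pZH : pauliZᴴ = pauliZ := by
  ext i j; fin_cases i <;> fin_cases j <;> simp [pauliZ]
theorem pXZ : pauliX * pauliZ = -(pauliZ * pauliX) := by
  ext i j; fin_cases i <;> fin_cases j <;> simp [pauliX, pauliZ]
theorem pYZ : pauliY * pauliZ = -(pauliZ * pauliY) := by
  ext i j; fin_cases i <;> fin_cases j <;> simp [pauliY, pauliZ]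
theorem pYX : pauliY * pauliX = -(pauliX * pauliY) := by
  ext i j; fin_cases i <;> fin_cases j <;> simp [pauliY, pauliX]

theorem jw_sq (n : ℕ) (p : Fin (2 * n)) : jw n p * jw n p = 1 := by
  rw [jw, tensorProd_mul, ← tensorProd_one]
  congr 1
  ext1 j
  split_ifs <;> simp [pX2, pY2, pZ2]

theorem jw_herm (n : ℕ) (p : Fin (2 * n)) : (jw n p)ᴴ = jw n p := by
  rw [jw, tensorProd_conjTranspose]
  congr 1
  ext1 j
  split_ifs <;> simp [pXH, pYH, pZH]

theorem jw_anti_lt (n : ℕ) (p q : Fin (2 * n)) (h : p < q) :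
    jw n p * jw n q = -(jw n q * jw n p) := by
  have hp : (p : ℕ) < q := h
  have hlt : (p : ℕ) / 2 < n := by omega
  have hs : (∏ j : Fin n, if j = ⟨(p : ℕ) / 2, hlt⟩ then (-1 : ℂ) else 1) = -1 := by
    simp
  rw [← neg_one_smul ℂ, ← hs, jw, jw, tensorProd_mul, tensorProd_mul, ← tensorProd_smul]
  congr 1
  ext1 j
  simp only [Fin.ext_iff]
  split_ifs <;> first | omega | simp [pXZ, pYZ, pYX]

theorem jw_anti (n : ℕ) (p q : Fin (2 * n)) (h : p ≠ q) :
    jw n p * jw n q = -(jw n q * jw n p) := by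
  rcases lt_or_gt_of_ne h with h | h
  · exact jw_anti_lt n p q h
  · rw [jw_anti_lt n q p h, neg_neg]

section abstract_part
variable {m ι : Type*} [Fintype m] [DecidableEq m] (L : ι → Matrix m m ℂ)

/-- Product of the spectral projections along a list. -/
noncomputable def projList (l : List ι) : Matrix m m ℂ :=
  (l.map (fun j => (2⁻¹ : ℂ) • (1 + L j))).prod

theorem projList_cons (k : ι) (l : List ι) :
    projList L (k :: l) = ((2⁻¹ : ℂ) • (1 + L k)) * projList L l := by
  simp [projList]

theorem projList_comm (A : Matrix m m ℂ) (l : List ι) (h : ∀ j ∈ l, Commute A (L j)) :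
    Commute A (projList L l) := by
  unfold projList
  apply Commute.list_prod_right
  intro x hx
  obtain ⟨j, hj, rfl⟩ := List.mem_map.mp hx
  exact ((Commute.one_right A).add_right (h j hj)).smul_right _

theorem projList_fix (hc : ∀ j k, Commute (L j) (L k)) (h2 : ∀ j, L j * L j = 1)
    (j : ι) (l : List ι) (hj : j ∈ l) : L j * projList L l = projList L l := by
  induction l with
  | nil => simp at hj
  | cons k l ih =>
    rw [projList_cons, ← mul_assoc]
    rcases List.mem_cons.mp hj with rfl | hj
    · congr 1
      rw [mul_smul_comm, mul_add, h2, mul_one, add_comm]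
    · have : Commute (L j) ((2⁻¹ : ℂ) • (1 + L k)) :=
        ((Commute.one_right _).add_right (hc j k)).smul_right _
      rw [this.eq, mul_assoc, ih hj]

theorem projList_id (l : List ι) (v : m → ℂ) (h : ∀ j ∈ l, L j *ᵥ v = v) :
    projList L l *ᵥ v = v := by
  induction l with
  | nil => simp [projList]
  | cons k l ih =>
    rw [projList_cons, ← Matrix.mulVec_mulVec, ih (fun j hj => h j (List.mem_cons_of_mem _ hj)),
      Matrix.smul_mulVec, Matrix.add_mulVec, h k List.mem_cons_self, Matrix.one_mulVec,
      ← two_smul ℂ v, smul_smul]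
    norm_num

theorem projList_trace (c : ι → Matrix m m ℂ) (hcc : ∀ j, c j * c j = 1)
    (ha : ∀ j, c j * L j = -(L j * c j)) (hb : ∀ j k, j ≠ k → Commute (c j) (L k))
    (l : List ι) (hl : l.Nodup) :
    (projList L l).trace = (2⁻¹ : ℂ) ^ l.length * Fintype.card m := by
  induction l with
  | nil => simp [projList]
  | cons k l ih =>
    obtain ⟨hk, hl⟩ := List.nodup_cons.mp hl
    have hP : Commute (c k) (projList L l) :=
      projList_comm L _ _ (fun j hj => hb k j (by rintro rfl; exact hk hj))
    have h0 : (L k * projList L l).trace = 0 := by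
      have h1 : (L k * projList L l).trace = (c k * (L k * projList L l) * c k).trace := by
        rw [Matrix.trace_mul_comm (c k * _), ← mul_assoc, hcc, one_mul]
      have h3 : c k * (L k * projList L l) * c k = -(L k * projList L l) := by
        rw [← mul_assoc, ha, neg_mul, mul_assoc (L k), hP.eq, neg_mul, mul_assoc, mul_assoc, hcc,
          mul_one]
      rw [h3, Matrix.trace_neg] at h1
      exact self_eq_neg.mp h1
    rw [projList_cons, smul_mul_assoc, Matrix.trace_smul, add_mul, one_mul, Matrix.trace_add, h0,
      add_zero, ih hl, List.length_cons, pow_succ, smul_eq_mul]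
    ring

end abstract_part

theorem jw_pair_comm (n : ℕ) (p q r : Fin (2 * n)) (h1 : p ≠ q) (h2 : p ≠ r) :
    Commute (jw n p) (Complex.I • (jw n q * jw n r)) := by
  apply Commute.smul_right
  show _ = _
  rw [← mul_assoc, jw_anti n p q h1, neg_mul, mul_assoc, jw_anti n p r h2, mul_neg, neg_neg,
    mul_assoc]

theorem linkOp_comm (n : ℕ) (σ : Equiv.Perm (Fin (2 * n))) (j k : Fin n) :
    Commute (linkOp n σ j) (linkOp n σ k) := by
  by_cases h : j = k
  · subst h; exact Commute.refl _
  · have h' : (j : ℕ) ≠ k := fun e => h (Fin.ext e)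
    unfold linkOp
    apply Commute.smul_left
    apply Commute.mul_left <;> apply jw_pair_comm <;> intro e <;>
      have := congrArg Fin.val (σ.injective e) <;> simp only at this <;> omega

theorem linkOp_ne (n : ℕ) (σ : Equiv.Perm (Fin (2 * n))) (j : Fin n) :
    σ ⟨2 * (j : ℕ), by omega⟩ ≠ σ ⟨2 * (j : ℕ) + 1, by omega⟩ := by
  intro e
  have := congrArg Fin.val (σ.injective e)
  simp only at this
  omega

theorem linkOp_herm (n : ℕ) (σ : Equiv.Perm (Fin (2 * n))) (j : Fin n) :
    (linkOp n σ j)ᴴ = linkOp n σ j := by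
  rw [linkOp, Matrix.conjTranspose_smul, Matrix.conjTranspose_mul, jw_herm, jw_herm,
    jw_anti _ _ _ (linkOp_ne n σ j).symm]
  simp

theorem linkOp_sq (n : ℕ) (σ : Equiv.Perm (Fin (2 * n))) (j : Fin n) :
    linkOp n σ j * linkOp n σ j = 1 := by
  have key : ∀ a b : Matrix (Fin n → Fin 2) (Fin n → Fin 2) ℂ, a * a = 1 → b * b = 1 →
      a * b = -(b * a) → (Complex.I • (a * b)) * (Complex.I • (a * b)) = 1 := by
    intro a b ha hb hab
    have : a * b * (a * b) = -1 := by
      nth_rewrite 2 [hab]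
      rw [mul_neg, mul_assoc, ← mul_assoc b, hb, one_mul, ha]
    rw [smul_mul_smul_comm, this]
    simp
  exact key _ _ (jw_sq _ _) (jw_sq _ _) (jw_anti _ _ _ (linkOp_ne n σ j))

theorem linkOp_c_anti (n : ℕ) (σ : Equiv.Perm (Fin (2 * n))) (j : Fin n) :
    jw n (σ ⟨2 * (j : ℕ), by omega⟩) * linkOp n σ j
      = -(linkOp n σ j * jw n (σ ⟨2 * (j : ℕ), by omega⟩)) := by
  rw [linkOp, mul_smul_comm, smul_mul_assoc, ← smul_neg]
  congr 1
  rw [mul_assoc, jw_anti _ _ _ (linkOp_ne n σ j).symm]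
  simp

theorem linkOp_c_comm (n : ℕ) (σ : Equiv.Perm (Fin (2 * n))) (j k : Fin n) (h : j ≠ k) :
    Commute (jw n (σ ⟨2 * (j : ℕ), by omega⟩)) (linkOp n σ k) := by
  have h' : (j : ℕ) ≠ k := fun e => h (Fin.ext e)
  apply jw_pair_comm <;> intro e <;>
    have := congrArg Fin.val (σ.injective e) <;> simp only at this <;> omega

/-- for any permutation `σ` of the `2n` Majorana modes, the operators
`i c_{σ(2j-1)} c_{σ(2j)}` are pairwise commuting Hermitian involutions, and their joint
`(+1)`-eigenspace has complex dimension exactly 1. -/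
theorem joint_eigenspace_dimension (n : ℕ) (hn : 1 ≤ n) (σ : Equiv.Perm (Fin (2 * n))) :
    (∀ j k : Fin n, linkOp n σ j * linkOp n σ k = linkOp n σ k * linkOp n σ j) ∧
    (∀ j : Fin n, (linkOp n σ j)ᴴ = linkOp n σ j) ∧
    (∀ j : Fin n, linkOp n σ j * linkOp n σ j = 1) ∧
    Module.finrank ℂ
      ↥(⨅ j : Fin n,
          Module.End.eigenspace (Matrix.toLin' (linkOp n σ j)) (1 : ℂ)) = 1 := by
  refine ⟨fun j k => (linkOp_comm n σ j k).eq, linkOp_herm n σ, linkOp_sq n σ, ?_⟩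
  set V := ⨅ j : Fin n, Module.End.eigenspace (Matrix.toLin' (linkOp n σ j)) (1 : ℂ) with hV
  have hmem : ∀ v, v ∈ V ↔ ∀ j, linkOp n σ j *ᵥ v = v := by
    intro v
    simp [hV, Submodule.mem_iInf, Module.End.mem_eigenspace_iff]
  have hproj : LinearMap.IsProj V (Matrix.toLin' (projList (linkOp n σ) (List.finRange n))) := by
    constructor
    · intro v
      rw [hmem]
      intro j
      rw [Matrix.toLin'_apply, Matrix.mulVec_mulVec,
        projList_fix _ (linkOp_comm n σ) (linkOp_sq n σ) j _ (List.mem_finRange j)]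
    · intro v hv
      rw [Matrix.toLin'_apply]
      exact projList_id _ _ _ (fun j _ => (hmem v).mp hv j)
  have htr := hproj.trace
  rw [Matrix.trace_toLin'_eq, projList_trace (linkOp n σ) (fun j => jw n (σ ⟨2 * (j : ℕ), by omega⟩))
    (fun j => jw_sq _ _) (linkOp_c_anti n σ) (linkOp_c_comm n σ) _ (List.nodup_finRange n)] at htr
  have h1 : ((Module.finrank ℂ V : ℕ) : ℂ) = 1 := by
    rw [← htr]
    simp
  exact_mod_cast h1
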